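/- arXiv:2303.10675 — 5 statements merged into one kernel-verified Lean document; each statement's English description precedes it below -/
import Mathlib

section
/- Consider the distributed value iteration algorithm under the setup and communication assumption below. Then there exists a vector r̄ ∈ ℝ^q such that for every agent ℓ and every agent index m, lim_{k→∞} r_{ℓ,m}^k = r̄_m; moreover, for every agent ℓ and every state i ∈ I_ℓ, the sequence (V_ℓ^k(i))_{k≥0} converges to a limit in ℝ. -/
open Finset Filter Topology

/-!
If every agent always held the exact aggregate values of the others, one iteration would be a map
on families `W ℓ i` which is an `α`-contraction for the sup distance, because averaging is
nonexpansive. Let `W` be its fixed point. Once all values are within `C` of `W`, the aggregates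
computed by the agents are within `C` of those of `W`, and so are the estimates held by the other
agents as soon as each link has been used once more; from then on every value is within `α * C` of
`W`. Repeating this shrinks the error to `0`.
-/

section Averages

variable {ι : Type*}

lemma dist_sum_mul_le_of_sum_eq_one {s : Finset ι} {w x y : ι → ℝ} {C : ℝ}
    (hw₀ : ∀ i ∈ s, 0 ≤ w i) (hw₁ : ∑ i ∈ s, w i = 1)
    (h : ∀ i ∈ s, w i ≠ 0 → dist (x i) (y i) ≤ C) :
    dist (∑ i ∈ s, w i * x i) (∑ i ∈ s, w i * y i) ≤ C :=
  calc
    dist (∑ i ∈ s, w i * x i) (∑ i ∈ s, w i * y i)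
        ≤ ∑ i ∈ s, dist (w i * x i) (w i * y i) := dist_sum_sum_le s _ _
    _ ≤ ∑ i ∈ s, w i * C := by
      refine sum_le_sum fun i hi ↦ ?_
      rw [Real.dist_eq, ← mul_sub, abs_mul, abs_of_nonneg (hw₀ i hi)]
      by_cases hwi : w i = 0
      · simp [hwi]
      · exact mul_le_mul_of_nonneg_left (h i hi hwi) (hw₀ i hi)
    _ = C := by rw [← sum_mul, hw₁, one_mul]

lemma dist_inf'_le {s : Finset ι} (hs : s.Nonempty) {f f' : ι → ℝ} {C : ℝ}
    (h : ∀ i ∈ s, dist (f i) (f' i) ≤ C) : dist (s.inf' hs f) (s.inf' hs f') ≤ C := by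
  have one_sided {f f' : ι → ℝ} (h : ∀ i ∈ s, dist (f i) (f' i) ≤ C) :
      s.inf' hs f - s.inf' hs f' ≤ C := by
    obtain ⟨b, hb, hmin⟩ := s.exists_mem_eq_inf' hs f'
    have hfb : s.inf' hs f ≤ f b := inf'_le f hb
    have hsub : f b - f' b ≤ C := (le_abs_self _).trans (h b hb)
    linarith
  exact abs_sub_le_iff.2 ⟨one_sided h, one_sided fun i hi ↦ dist_comm (f i) _ ▸ h i hi⟩

end Averages

section Sequences

lemma exists_lt_of_contracting {P : ℝ → Prop} {K C₀ ε : ℝ} (hK₀ : 0 ≤ K) (hK₁ : K < 1)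
    (h₀ : P C₀) (hP : ∀ C, P C → P (K * C)) (hε : 0 < ε) : ∃ C < ε, P C := by
  have hpow : ∀ N : ℕ, P (K ^ N * C₀) := by
    intro N
    induction N with
    | zero => simpa using h₀
    | succ N ih => simpa only [pow_succ', mul_assoc] using hP _ ih
  have hlim : Tendsto (fun N : ℕ ↦ K ^ N * C₀) atTop (𝓝 0) := by
    simpa using (tendsto_pow_atTop_nhds_zero_of_lt_one hK₀ hK₁).mul_const C₀
  obtain ⟨N, hN⟩ := (hlim.eventually_lt_const hε).exists
  exact ⟨_, hN, hpow N⟩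

lemma tendsto_of_sample_and_hold {β : Type*} {x s : ℕ → β} {S : ℕ → Prop} [DecidablePred S]
    (hs : ∀ k, s (k + 1) = if S k then x (k + 1) else s k) (hS : ∃ᶠ k in atTop, S k)
    {F : Filter β} (hx : Tendsto x atTop F) : Tendsto s atTop F := by
  intro t ht
  obtain ⟨N, hN⟩ := eventually_atTop.1 (hx ht)
  obtain ⟨k₀, hk₀, hSk₀⟩ := frequently_atTop.1 hS N
  refine eventually_atTop.2 ⟨k₀ + 1, fun k hk ↦ Set.mem_preimage.2 ?_⟩
  induction k, hk using Nat.le_induction with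
  | base => simpa only [hs, if_pos hSk₀] using hN (k₀ + 1) (by lia)
  | succ k hk ih =>
    rw [hs]
    split_ifs
    · exact hN (k + 1) (by lia)
    · exact ih

end Sequences

section Bellman

variable {X A : Type*} [Fintype X]

/-- The Bellman operator of a discounted decision problem at a single state, with action set `U`,
transition probabilities `p u j` and costs `g u j`, evaluated at the cost-to-go `x`. -/
noncomputable def bellman (α : ℝ) (U : Finset A) (hU : U.Nonempty) (p g : A → X → ℝ)
    (x : X → ℝ) : ℝ :=
  U.inf' hU fun u ↦ ∑ j, p u j * (g u j + α * x j)

lemma lipschitzWith_bellman (α : NNReal) {U : Finset A} (hU : U.Nonempty) {p : A → X → ℝ}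
    (g : A → X → ℝ) (hp₀ : ∀ u ∈ U, ∀ j, 0 ≤ p u j) (hp₁ : ∀ u ∈ U, ∑ j, p u j = 1) :
    LipschitzWith α (bellman (α : ℝ) U hU p g) := by
  refine LipschitzWith.of_dist_le_mul fun x y ↦ dist_inf'_le hU fun u hu ↦
    dist_sum_mul_le_of_sum_eq_one (fun j _ ↦ hp₀ u hu j) (hp₁ u hu) fun j _ _ ↦ ?_
  rw [dist_add_left, Real.dist_eq, ← mul_sub, abs_mul, NNReal.abs_eq]
  exact mul_le_mul_of_nonneg_left (dist_le_pi_dist x y j) α.coe_nonneg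

end Bellman

/-- Aggregation data: agent `m` keeps values for the states in `support m`, which it averages with
the disaggregation probabilities `d m`; a state `j` is represented by the agents with the
aggregation probabilities `φ j`. The sets `support m` may overlap (soft aggregation); values of
`d m` outside `support m` are irrelevant. -/
structure Aggregation (X Q : Type*) [Fintype Q] where
  support : Q → Finset X
  φ : X → Q → ℝ
  φ_nonneg : ∀ j m, 0 ≤ φ j m
  φ_sum : ∀ j, ∑ m, φ j m = 1
  φ_eq_zero : ∀ j m, j ∉ support m → φ j m = 0
  d : Q → X → ℝ
  d_nonneg : ∀ m, ∀ i ∈ support m, 0 ≤ d m i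
  d_sum : ∀ m, ∑ i ∈ support m, d m i = 1

namespace Aggregation

variable {X Q : Type*} [Fintype Q]

section Aggregate

variable (a : Aggregation X Q)

/-- The aggregate value that agent `m` computes from its values `v`. -/
def aggregate (m : Q) (v : X → ℝ) : ℝ :=
  ∑ i ∈ a.support m, a.d m i * v i

lemma dist_aggregate_le {m : Q} {v v' : X → ℝ} {C : ℝ}
    (h : ∀ i ∈ a.support m, dist (v i) (v' i) ≤ C) :
    dist (a.aggregate m v) (a.aggregate m v') ≤ C :=
  dist_sum_mul_le_of_sum_eq_one (a.d_nonneg m) (a.d_sum m) fun i hi _ ↦ h i hi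

end Aggregate

variable [DecidableEq Q]

section View

variable (a : Aggregation X Q)

/-- The cost-to-go vector seen by agent `ℓ`: its own values `v` on its share of each state, and
the estimates `ρ m` of the aggregate values of the other agents on the rest. -/
def view (ℓ : Q) (v : X → ℝ) (ρ : Q → ℝ) (j : X) : ℝ :=
  a.φ j ℓ * v j + ∑ m ∈ univ.erase ℓ, a.φ j m * ρ m

lemma view_eq_sum_update (ℓ : Q) (v : X → ℝ) (ρ : Q → ℝ) (j : X) :
    a.view ℓ v ρ j = ∑ m, a.φ j m * Function.update ρ ℓ (v j) m := by
  rw [view, ← add_sum_erase univ _ (mem_univ ℓ), Function.update_self]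
  congr 1
  exact sum_congr rfl fun m hm ↦ by rw [Function.update_of_ne (ne_of_mem_erase hm)]

lemma dist_view_le {ℓ : Q} {v v' : X → ℝ} {ρ ρ' : Q → ℝ} {C : ℝ}
    (hv : ∀ i ∈ a.support ℓ, dist (v i) (v' i) ≤ C) (hρ : ∀ m, dist (ρ m) (ρ' m) ≤ C) (j : X) :
    dist (a.view ℓ v ρ j) (a.view ℓ v' ρ' j) ≤ C := by
  rw [view_eq_sum_update, view_eq_sum_update]
  refine dist_sum_mul_le_of_sum_eq_one (fun m _ ↦ a.φ_nonneg j m) (a.φ_sum j) fun m _ hm ↦ ?_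
  obtain rfl | hne := eq_or_ne m ℓ
  · have hj : j ∈ a.support m := not_imp_comm.1 (a.φ_eq_zero j m) hm
    simpa only [Function.update_self] using hv j hj
  · simpa only [Function.update_of_ne hne] using hρ m

end View

section Synchronous

variable (a : Aggregation X Q) (T : X → (X → ℝ) → ℝ)

/-- One iteration under instantaneous communication: every agent applies the local operators `T i`
with the exact aggregate values of the others. Its fixed point is the limit of the distributed
iteration. Values are updated also at the states outside `support ℓ`, where nobody reads them. -/
def synchronousUpdate (W : Q → X → ℝ) (ℓ : Q) (i : X) : ℝ :=
  T i (a.view ℓ (W ℓ) fun m ↦ a.aggregate m (W m))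

variable {T} [Fintype X]

lemma contractingWith_synchronousUpdate {K : NNReal} (hK : K < 1)
    (hT : ∀ i, LipschitzWith K (T i)) : ContractingWith K (a.synchronousUpdate T) := by
  refine ⟨hK, LipschitzWith.of_dist_le_mul fun W W' ↦ ?_⟩
  have hdist (ℓ : Q) (i : X) : dist (W ℓ i) (W' ℓ i) ≤ dist W W' :=
    (dist_le_pi_dist (W ℓ) (W' ℓ) i).trans (dist_le_pi_dist W W' ℓ)
  have hview (ℓ : Q) : dist (a.view ℓ (W ℓ) fun m ↦ a.aggregate m (W m))
      (a.view ℓ (W' ℓ) fun m ↦ a.aggregate m (W' m)) ≤ dist W W' :=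
    (dist_pi_le_iff dist_nonneg).2 <| a.dist_view_le (fun i _ ↦ hdist ℓ i)
      fun m ↦ a.dist_aggregate_le fun i _ ↦ hdist m i
  have hKdist : 0 ≤ K * dist W W' := by positivity
  exact (dist_pi_le_iff hKdist).2 fun ℓ ↦ (dist_pi_le_iff hKdist).2 fun i ↦
    (hT i).dist_le_mul_of_le (hview ℓ)

end Synchronous

/-- `V k ℓ` are the values and `r k ℓ` the estimates held by agent `ℓ` after `k` iterations of the
always-transmit algorithm with local operators `T i` and communication edges `E k`. An agent always
knows its own aggregate value, so the diagonal estimates are treated as received at every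
iteration. -/
structure IsDistributedIteration (a : Aggregation X Q) (T : X → (X → ℝ) → ℝ)
    (E : ℕ → Finset (Q × Q)) (V : ℕ → Q → X → ℝ) (r : ℕ → Q → Q → ℝ) : Prop where
  value_succ : ∀ k ℓ, ∀ i ∈ a.support ℓ, V (k + 1) ℓ i = T i (a.view ℓ (V k ℓ) (r k ℓ))
  estimate_succ : ∀ k ℓ m, r (k + 1) ℓ m =
    if m = ℓ ∨ (m, ℓ) ∈ E k then a.aggregate m (V (k + 1) m) else r k ℓ m

namespace IsDistributedIteration

variable {a : Aggregation X Q} {T : X → (X → ℝ) → ℝ} {E : ℕ → Finset (Q × Q)}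
  {V : ℕ → Q → X → ℝ} {r : ℕ → Q → Q → ℝ}

lemma tendsto_estimate_of_tendsto_aggregate (h : a.IsDistributedIteration T E V r)
    (hE : ∀ m ℓ, m ≠ ℓ → ∃ᶠ k in atTop, (m, ℓ) ∈ E k) (ℓ : Q) {m : Q} {F : Filter ℝ}
    (hm : Tendsto (fun k ↦ a.aggregate m (V k m)) atTop F) :
    Tendsto (fun k ↦ r k ℓ m) atTop F := by
  refine tendsto_of_sample_and_hold (fun k ↦ h.estimate_succ k ℓ m) ?_ hm
  obtain heq | hne := eq_or_ne m ℓ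
  · exact Frequently.of_forall fun _ ↦ .inl heq
  · exact (hE m ℓ hne).mono fun _ ↦ .inr

variable [Fintype X] {W : Q → X → ℝ} {K : NNReal}

lemma dist_value_succ_le (h : a.IsDistributedIteration T E V r)
    (hT : ∀ i, LipschitzWith K (T i)) (hW : Function.IsFixedPt (a.synchronousUpdate T) W)
    {k : ℕ} {C : ℝ} (hV : ∀ ℓ, ∀ i ∈ a.support ℓ, dist (V k ℓ i) (W ℓ i) ≤ C)
    (hr : ∀ ℓ m, dist (r k ℓ m) (a.aggregate m (W m)) ≤ C) (ℓ : Q) {i : X}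
    (hi : i ∈ a.support ℓ) : dist (V (k + 1) ℓ i) (W ℓ i) ≤ K * C := by
  have : Nonempty X := ⟨i⟩
  have hWi : T i (a.view ℓ (W ℓ) fun m ↦ a.aggregate m (W m)) = W ℓ i :=
    congrFun (congrFun hW ℓ) i
  rw [h.value_succ k ℓ i hi, ← hWi]
  exact (hT i).dist_le_mul_of_le (dist_pi_le_iff'.2 (a.dist_view_le (hV ℓ) (hr ℓ)))

lemma exists_forall_dist_le (h : a.IsDistributedIteration T E V r) (hK : K ≤ 1)
    (hT : ∀ i, LipschitzWith K (T i)) (hW : Function.IsFixedPt (a.synchronousUpdate T) W) :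
    ∃ C, ∀ k, (∀ ℓ, ∀ i ∈ a.support ℓ, dist (V k ℓ i) (W ℓ i) ≤ C) ∧
      ∀ ℓ m, dist (r k ℓ m) (a.aggregate m (W m)) ≤ C := by
  let R : Q → Q → ℝ := fun _ m ↦ a.aggregate m (W m)
  refine ⟨max (dist (V 0) W) (dist (r 0) R), fun k ↦ ?_⟩
  induction k with
  | zero =>
    exact ⟨fun ℓ i _ ↦ le_max_of_le_left <|
        (dist_le_pi_dist (V 0 ℓ) (W ℓ) i).trans (dist_le_pi_dist (V 0) W ℓ),
      fun ℓ m ↦ le_max_of_le_right <|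
        (dist_le_pi_dist (r 0 ℓ) (R ℓ) m).trans (dist_le_pi_dist (r 0) R ℓ)⟩
  | succ k ih =>
    have hvalue (ℓ : Q) (i : X) (hi : i ∈ a.support ℓ) :
        dist (V (k + 1) ℓ i) (W ℓ i) ≤ max (dist (V 0) W) (dist (r 0) R) :=
      (h.dist_value_succ_le hT hW ih.1 ih.2 ℓ hi).trans <|
        mul_le_of_le_one_left (le_max_of_le_left dist_nonneg) hK
    refine ⟨hvalue, fun ℓ m ↦ ?_⟩
    rw [h.estimate_succ]
    split_ifs
    · exact a.dist_aggregate_le (hvalue m)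
    · exact ih.2 ℓ m

lemma eventually_dist_value_le_mul (h : a.IsDistributedIteration T E V r)
    (hE : ∀ m ℓ, m ≠ ℓ → ∃ᶠ k in atTop, (m, ℓ) ∈ E k) (hT : ∀ i, LipschitzWith K (T i))
    (hW : Function.IsFixedPt (a.synchronousUpdate T) W) {C : ℝ}
    (hV : ∀ᶠ k in atTop, ∀ ℓ, ∀ i ∈ a.support ℓ, dist (V k ℓ i) (W ℓ i) ≤ C) :
    ∀ᶠ k in atTop, ∀ ℓ, ∀ i ∈ a.support ℓ, dist (V k ℓ i) (W ℓ i) ≤ K * C := by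
  have haggregate (m : Q) : Tendsto (fun k ↦ a.aggregate m (V k m)) atTop
      (𝓟 (Metric.closedBall (a.aggregate m (W m)) C)) :=
    tendsto_principal.2 <| hV.mono fun k hk ↦ a.dist_aggregate_le (hk m)
  have hestimate : ∀ᶠ k in atTop, ∀ ℓ m, dist (r k ℓ m) (a.aggregate m (W m)) ≤ C :=
    eventually_all.2 fun ℓ ↦ eventually_all.2 fun m ↦
      tendsto_principal.1 (h.tendsto_estimate_of_tendsto_aggregate hE ℓ (haggregate m))
  have hsucc : ∀ᶠ k in atTop, ∀ ℓ, ∀ i ∈ a.support ℓ, dist (V (k + 1) ℓ i) (W ℓ i) ≤ K * C := by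
    filter_upwards [hV, hestimate] with k hVk hrk ℓ i hi
    exact h.dist_value_succ_le hT hW hVk hrk ℓ hi
  rw [← map_add_atTop_eq_nat 1]
  exact hsucc

theorem tendsto_value (h : a.IsDistributedIteration T E V r)
    (hE : ∀ m ℓ, m ≠ ℓ → ∃ᶠ k in atTop, (m, ℓ) ∈ E k) (hK : K < 1)
    (hT : ∀ i, LipschitzWith K (T i)) (hW : Function.IsFixedPt (a.synchronousUpdate T) W)
    {ℓ : Q} {i : X} (hi : i ∈ a.support ℓ) :
    Tendsto (fun k ↦ V k ℓ i) atTop (𝓝 (W ℓ i)) := by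
  obtain ⟨C₀, hC₀⟩ := h.exists_forall_dist_le hK.le hT hW
  refine Metric.tendsto_nhds.2 fun ε hε ↦ ?_
  obtain ⟨C, hCε, hC⟩ := exists_lt_of_contracting
    (P := fun C ↦ ∀ᶠ k in atTop, ∀ ℓ, ∀ i ∈ a.support ℓ, dist (V k ℓ i) (W ℓ i) ≤ C)
    K.coe_nonneg hK (Eventually.of_forall fun k ↦ (hC₀ k).1)
    (fun C ↦ h.eventually_dist_value_le_mul hE hT hW) hε
  exact hC.mono fun k hk ↦ (hk ℓ i hi).trans_lt hCε

theorem tendsto_estimate (h : a.IsDistributedIteration T E V r)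
    (hE : ∀ m ℓ, m ≠ ℓ → ∃ᶠ k in atTop, (m, ℓ) ∈ E k) (hK : K < 1)
    (hT : ∀ i, LipschitzWith K (T i)) (hW : Function.IsFixedPt (a.synchronousUpdate T) W)
    (ℓ m : Q) : Tendsto (fun k ↦ r k ℓ m) atTop (𝓝 (a.aggregate m (W m))) :=
  h.tendsto_estimate_of_tendsto_aggregate hE ℓ <|
    tendsto_finsetSum _ fun _ hi ↦ (h.tendsto_value hE hK hT hW hi).const_mul _

end IsDistributedIteration

end Aggregation

lemma sum_ite_mem_eq_one_of_partition {X Q : Type*} [DecidableEq X] [Fintype Q]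
    {I : Q → Finset X} (hdisj : ∀ ℓ m, ℓ ≠ m → Disjoint (I ℓ) (I m)) {j : X}
    (hcover : ∃ ℓ, j ∈ I ℓ) : ∑ m, (if j ∈ I m then (1 : ℝ) else 0) = 1 := by
  obtain ⟨ℓ, hℓ⟩ := hcover
  rw [sum_eq_single_of_mem ℓ (mem_univ ℓ) fun m _ hm ↦
    if_neg (disjoint_left.1 (hdisj ℓ m hm.symm) hℓ), if_pos hℓ]

theorem stmt0_general
    {X Q A : Type*} [Fintype X] [Fintype Q] [DecidableEq Q]
    (α : ℝ) (hα0 : 0 ≤ α) (hα1 : α < 1)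
    (I : Q → Finset X)
    (φ : X → Q → ℝ)
    (hφ0 : ∀ j m, 0 ≤ φ j m)
    (hφ1 : ∀ j, ∑ m, φ j m = 1)
    (hφz : ∀ j m, j ∉ I m → φ j m = 0)
    (U : X → Finset A) (hU : ∀ i, (U i).Nonempty)
    (p : X → A → X → ℝ) (g : X → A → X → ℝ)
    (hp0 : ∀ i, ∀ u ∈ U i, ∀ j, 0 ≤ p i u j)
    (hp1 : ∀ i, ∀ u ∈ U i, ∑ j, p i u j = 1)
    (d : Q → X → ℝ)
    (hd0 : ∀ ℓ, ∀ i ∈ I ℓ, 0 ≤ d ℓ i)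
    (hd1 : ∀ ℓ, ∑ i ∈ I ℓ, d ℓ i = 1)
    (E : ℕ → Finset (Q × Q))
    (V : ℕ → Q → X → ℝ) (r : ℕ → Q → Q → ℝ)
    (hVrec : ∀ k ℓ, ∀ i ∈ I ℓ,
      V (k + 1) ℓ i =
        (U i).inf' (hU i) (fun u ↦ ∑ j, p i u j *
          (g i u j + α * (φ j ℓ * V k ℓ j + ∑ m ∈ univ.erase ℓ, φ j m * r k ℓ m))))
    (hrdiag : ∀ k ℓ, r (k + 1) ℓ ℓ = ∑ j ∈ I ℓ, d ℓ j * V (k + 1) ℓ j)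
    (hroff : ∀ k ℓ m, m ≠ ℓ →
      r (k + 1) ℓ m = if (m, ℓ) ∈ E k then r (k + 1) m m else r k ℓ m)
    (hE : ∀ m ℓ, m ≠ ℓ → ∃ᶠ k in atTop, (m, ℓ) ∈ E k) :
    ∃ rbar : Q → ℝ,
      (∀ ℓ m, Tendsto (fun k ↦ r k ℓ m) atTop (𝓝 (rbar m))) ∧
      (∀ ℓ, ∀ i ∈ I ℓ, ∃ L : ℝ, Tendsto (fun k ↦ V k ℓ i) atTop (𝓝 L)) := by
  lift α to NNReal using hα0
  let a : Aggregation X Q := ⟨I, φ, hφ0, hφ1, hφz, d, hd0, hd1⟩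
  let T : X → (X → ℝ) → ℝ := fun i ↦ bellman α (U i) (hU i) (p i) (g i)
  have hT (i : X) : LipschitzWith α (T i) := lipschitzWith_bellman α (hU i) (g i) (hp0 i) (hp1 i)
  have hiter : a.IsDistributedIteration T E V r := by
    refine ⟨hVrec, fun k ℓ m ↦ ?_⟩
    obtain rfl | hne := eq_or_ne m ℓ
    · rw [if_pos (.inl rfl)]
      exact hrdiag k m
    · simp only [hne, false_or, hroff k ℓ m hne, hrdiag k m, Aggregation.aggregate, a]
  have hW := (a.contractingWith_synchronousUpdate hα1 hT).fixedPoint_isFixedPt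
  exact ⟨_, hiter.tendsto_estimate hE hα1 hT hW,
    fun ℓ i hi ↦ ⟨_, hiter.tendsto_value hE hα1 hT hW hi⟩⟩

theorem stmt0
    {n q : ℕ} (hn : 0 < n) (hq : 0 < q)
    {A : Type*}
    (α : ℝ) (hα0 : 0 ≤ α) (hα1 : α < 1)
    (I : Fin q → Finset (Fin n))
    (hIne : ∀ ℓ, (I ℓ).Nonempty)
    (hIdisj : ∀ ℓ m, ℓ ≠ m → Disjoint (I ℓ) (I m))
    (hIcover : ∀ i : Fin n, ∃ ℓ, i ∈ I ℓ)
    (U : Fin n → Finset A) (hU : ∀ i, (U i).Nonempty)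
    (p : Fin n → A → Fin n → ℝ) (g : Fin n → A → Fin n → ℝ)
    (hp0 : ∀ i, ∀ u ∈ U i, ∀ j, 0 ≤ p i u j)
    (hp1 : ∀ i, ∀ u ∈ U i, ∑ j, p i u j = 1)
    (d : Fin q → Fin n → ℝ)
    (hd0 : ∀ ℓ i, 0 ≤ d ℓ i)
    (hdz : ∀ ℓ i, i ∉ I ℓ → d ℓ i = 0)
    (hd1 : ∀ ℓ, ∑ i ∈ I ℓ, d ℓ i = 1)
    (E : ℕ → Finset (Fin q × Fin q))
    (V : ℕ → Fin q → Fin n → ℝ) (r : ℕ → Fin q → Fin q → ℝ)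
    (hV0 : ∀ ℓ, ∀ i ∈ I ℓ, V 0 ℓ i = 0)
    (hr0 : ∀ ℓ m, r 0 ℓ m = 0)
    (hVrec : ∀ k ℓ, ∀ i ∈ I ℓ,
      V (k + 1) ℓ i =
        (U i).inf' (hU i) (fun u => ∑ j, p i u j *
          (g i u j + α * ((if j ∈ I ℓ then (1 : ℝ) else 0) * V k ℓ j +
            ∑ m ∈ Finset.univ.erase ℓ, (if j ∈ I m then (1 : ℝ) else 0) * r k ℓ m))))
    (hrdiag : ∀ k ℓ, r (k + 1) ℓ ℓ = ∑ j ∈ I ℓ, d ℓ j * V (k + 1) ℓ j)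
    (hroff : ∀ k ℓ m, m ≠ ℓ →
      r (k + 1) ℓ m = if (m, ℓ) ∈ E k then r (k + 1) m m else r k ℓ m)
    (B : ℕ)
    (hE : ∀ k (m ℓ : Fin q), ∃ t, k ≤ t ∧ t ≤ k + B ∧ (m, ℓ) ∈ E t)
    :
    ∃ rbar : Fin q → ℝ,
      (∀ ℓ m : Fin q, Tendsto (fun k => r k ℓ m) atTop (𝓝 (rbar m))) ∧
      (∀ ℓ, ∀ i ∈ I ℓ, ∃ L : ℝ, Tendsto (fun k => V k ℓ i) atTop (𝓝 L)) := by
  exact stmt0_general α hα0 hα1 I (fun j m ↦ if j ∈ I m then 1 else 0)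
    (fun _ _ ↦ by positivity) (fun j ↦ sum_ite_mem_eq_one_of_partition hIdisj (hIcover j))
    (fun _ _ hj ↦ if_neg hj) U hU p g hp0 hp1 d (fun ℓ i _ ↦ hd0 ℓ i) hd1 E V r hVrec hrdiag hroff
    fun m ℓ _ ↦ frequently_atTop.2 fun k ↦ (hE k m ℓ).imp fun _ ht ↦ ⟨ht.1, ht.2.2⟩
end

section
/- Consider the distributed value iteration algorithm under the setup below, with full communication at every iteration (B = 0, i.e., every ordered pair of agents (m,ℓ) belongs to E(k) for every k). Let J* : X → ℝ be the unique solution of the Bellman equation J*(i) = min_{u∈U(i)} Σ_{j∈X} p(i,u,j)·(g(i,u,j) + α·J*(j)) for all i ∈ X, and let δ = max_{ℓ} max_{i,j∈I_ℓ} |J*(i) − J*(j)|. Then for every agent ℓ and every state i ∈ I_ℓ, the limit V_ℓ*(i) = lim_{k→∞} V_ℓ^k(i) exists and satisfies |V_ℓ*(i) − J*(i)| ≤ α·δ/(1−α). -/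
open Finset Filter Topology

/-!
Once communication is full, every `r ℓ m` is the `d m`-average of the current values of agent `m`,
so the values `V k ℓ i`, `i ∈ I ℓ`, of all agents together form one vector over the state space,
and an iteration applies one fixed map `F` to it: a Bellman backup in which the agent of the
updated state sees its own values exactly and the other blocks through their averages. Averaging
is nonexpansive in the sup norm, so `F` is an `α`-contraction and the vectors converge to its
fixed point. Replacing `J*` by its block averages moves it by at most `δ`, so `F` moves `J*` by at
most `α * δ`, and the a priori estimate `dist x (fixedPoint F) ≤ dist x (F x) / (1 - α)` gives the
bound.
-/

section Preliminaries

open scoped NNReal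

theorem lipschitzWith_finset_inf' {ι E : Type*} [PseudoEMetricSpace E] {K : ℝ≥0} {s : Finset ι}
    (hs : s.Nonempty) {f : ι → E → ℝ} (hf : ∀ i ∈ s, LipschitzWith K (f i)) :
    LipschitzWith K fun x => s.inf' hs fun i => f i x := by
  have h : (fun x => s.inf' hs fun i => f i x) = s.inf' hs f :=
    funext fun x => (Finset.inf'_apply hs f x).symm
  rw [h]
  exact inf'_induction hs f (fun _ ha _ hb => max_self K ▸ ha.min hb) hf

theorem dist_sum_smul_le_of_sum_eq_one {ι E : Type*} [SeminormedAddCommGroup E] [NormedSpace ℝ E]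
    {s : Finset ι} {w : ι → ℝ} {x y : ι → E} {C : ℝ} (hw0 : ∀ i ∈ s, 0 ≤ w i)
    (hw1 : ∑ i ∈ s, w i = 1) (hxy : ∀ i ∈ s, dist (x i) (y i) ≤ C) :
    dist (∑ i ∈ s, w i • x i) (∑ i ∈ s, w i • y i) ≤ C := by
  have h : ∑ i ∈ s, w i • (x i - y i) ∈ Metric.closedBall 0 C :=
    (convex_closedBall 0 C).sum_mem hw0 hw1 fun i hi => by
      simpa only [mem_closedBall_zero_iff, ← dist_eq_norm] using hxy i hi
  simpa only [mem_closedBall_zero_iff, smul_sub, sum_sub_distrib, ← dist_eq_norm] using h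

theorem ite_mul_add_sum_erase_ite_mul {ι R : Type*} [Fintype ι] [DecidableEq ι]
    [NonAssocSemiring R] (a b : ι) (x : R) (r : ι → R) :
    (if a = b then 1 else 0) * x + ∑ m ∈ univ.erase b, (if a = m then 1 else 0) * r m =
      if a = b then x else r a := by
  split_ifs with h <;> simp [h]

theorem exists_forall_mem_iff_eq {ι X : Type*} {I : ι → Finset X}
    (hdisj : ∀ ℓ m, ℓ ≠ m → Disjoint (I ℓ) (I m)) (hcover : ∀ i, ∃ ℓ, i ∈ I ℓ) :
    ∃ c : X → ι, ∀ i m, i ∈ I m ↔ c i = m := by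
  choose c hc using hcover
  refine ⟨c, fun i m => ⟨fun hi => ?_, fun h => h ▸ hc i⟩⟩
  by_contra hne
  exact disjoint_left.1 (hdisj (c i) m hne) (hc i) hi

theorem tendsto_fixedPoint_of_eventually_succ_eq {E : Type*} [MetricSpace E]
    [CompleteSpace E] [Nonempty E] {K : ℝ≥0} {F : E → E} (hF : ContractingWith K F) {x : ℕ → E}
    (hx : ∀ᶠ k in atTop, x (k + 1) = F (x k)) :
    Tendsto x atTop (𝓝 (ContractingWith.fixedPoint F hF)) := by
  obtain ⟨N, hN⟩ := eventually_atTop.1 hx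
  have hiter : ∀ k, x (k + N) = F^[k] (x N) := fun k => by
    induction k with
    | zero => rw [Nat.zero_add, Function.iterate_zero_apply]
    | succ k ih =>
      rw [Function.iterate_succ_apply', ← ih, ← hN _ (Nat.le_add_left N k), Nat.add_right_comm]
  rw [← tendsto_add_atTop_iff_nat N]
  simpa only [hiter] using hF.tendsto_iterate_fixedPoint (x N)

end Preliminaries

section Aggregation

variable {X L : Type*} [Fintype X] [DecidableEq L] {c : X → L} {d : L → X → ℝ}

/-- The value vector available to agent `ℓ` when the joint values are `J`: exact on its own states,
and on the states of another agent the `d`-weighted average of that agent's values. The partition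
of the states is encoded by the map `c` sending each state to its agent. -/
def localView (c : X → L) (d : L → X → ℝ) (ℓ : L) (J : X → ℝ) (j : X) : ℝ :=
  if c j = ℓ then J j else ∑ i with c i = c j, d (c j) i * J i

theorem lipschitzWith_localView (hd0 : ∀ i, 0 ≤ d (c i) i)
    (hd1 : ∀ ℓ, ∑ i with c i = ℓ, d ℓ i = 1) (ℓ : L) : LipschitzWith 1 (localView c d ℓ) := by
  refine LipschitzWith.mk_one fun J K => (dist_pi_le_iff dist_nonneg).2 fun j => ?_
  unfold localView
  split_ifs
  · exact dist_le_pi_dist J K j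
  · refine dist_sum_smul_le_of_sum_eq_one (fun i hi => ?_) (hd1 (c j))
      fun i _ => dist_le_pi_dist J K i
    exact (mem_filter.1 hi).2 ▸ hd0 i

theorem dist_localView_self_le (hd0 : ∀ i, 0 ≤ d (c i) i)
    (hd1 : ∀ ℓ, ∑ i with c i = ℓ, d ℓ i = 1) {J : X → ℝ} {δ : ℝ} (hδ0 : 0 ≤ δ)
    (hδ : ∀ i j, c i = c j → dist (J i) (J j) ≤ δ) (ℓ : L) :
    dist (localView c d ℓ J) J ≤ δ := by
  refine (dist_pi_le_iff hδ0).2 fun j => ?_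
  unfold localView
  split_ifs
  · rwa [dist_self]
  · refine (convex_closedBall (J j) δ).sum_mem (fun i hi => ?_) (hd1 (c j))
      fun i hi => hδ i j (mem_filter.1 hi).2
    exact (mem_filter.1 hi).2 ▸ hd0 i

theorem ite_mul_add_sum_eq_localView [Fintype L] {V : L → X → ℝ} {r : L → ℝ}
    (hr : ∀ m, r m = ∑ i with c i = m, d m i * V m i) (ℓ : L) (j : X) :
    (if c j = ℓ then 1 else 0) * V ℓ j + ∑ m ∈ univ.erase ℓ, (if c j = m then 1 else 0) * r m =
      localView c d ℓ (fun i => V (c i) i) j := by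
  rw [ite_mul_add_sum_erase_ite_mul, localView]
  split_ifs with h
  · rw [h]
  · rw [hr]
    exact sum_congr rfl fun i hi => by rw [(mem_filter.1 hi).2]

end Aggregation

/-- A finite-state Markov decision process with finite nonempty action sets. The conditions on the
transition probabilities `prob i u j` concern only the actions `u` available in the state `i`. -/
structure MarkovDecisionProcess (X A : Type*) [Fintype X] where
  actions : X → Finset A
  actions_nonempty : ∀ i, (actions i).Nonempty
  prob : X → A → X → ℝ
  cost : X → A → X → ℝ
  prob_nonneg : ∀ i, ∀ u ∈ actions i, ∀ j, 0 ≤ prob i u j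
  sum_prob : ∀ i, ∀ u ∈ actions i, ∑ j, prob i u j = 1

namespace MarkovDecisionProcess

open scoped NNReal

variable {X L A : Type*} [Fintype X] [DecidableEq L] (M : MarkovDecisionProcess X A) {α : ℝ≥0}
  {c : X → L} {d : L → X → ℝ}

/-- The Bellman operator with discount factor `α`. -/
noncomputable def bellman (α : ℝ≥0) (J : X → ℝ) (i : X) : ℝ :=
  (M.actions i).inf' (M.actions_nonempty i)
    fun u => ∑ j, M.prob i u j * (M.cost i u j + α * J j)

/-- One joint step of value iteration by the agents: each state is updated by the Bellman operator
applied to the view its own agent has of the current values. -/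
noncomputable def distributedBellman (α : ℝ≥0) (c : X → L) (d : L → X → ℝ) (J : X → ℝ) (i : X) :
    ℝ :=
  M.bellman α (localView c d (c i) J) i

theorem lipschitzWith_bellman_apply (i : X) : LipschitzWith α fun J => M.bellman α J i := by
  refine lipschitzWith_finset_inf' _ fun u hu => LipschitzWith.of_dist_le_mul fun J K => ?_
  refine dist_sum_smul_le_of_sum_eq_one (fun j _ => M.prob_nonneg i u hu j) (M.sum_prob i u hu)
    fun j _ => ?_
  rw [dist_add_left, ← smul_eq_mul, ← smul_eq_mul, dist_smul₀, Real.norm_of_nonneg α.coe_nonneg]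
  gcongr
  exact dist_le_pi_dist J K j

theorem contractingWith_distributedBellman (hα : α < 1) (hd0 : ∀ i, 0 ≤ d (c i) i)
    (hd1 : ∀ ℓ, ∑ i with c i = ℓ, d ℓ i = 1) :
    ContractingWith α (M.distributedBellman α c d) := by
  refine ⟨hα, LipschitzWith.of_dist_le_mul fun J K =>
    (dist_pi_le_iff (by positivity)).2 fun i => ?_⟩
  have h := (M.lipschitzWith_bellman_apply (α := α) i).comp
    (lipschitzWith_localView hd0 hd1 (c i))
  rw [mul_one] at h
  exact h.dist_le_mul J K

theorem dist_distributedBellman_self_le (hd0 : ∀ i, 0 ≤ d (c i) i)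
    (hd1 : ∀ ℓ, ∑ i with c i = ℓ, d ℓ i = 1) {J : X → ℝ} (hJ : Function.IsFixedPt (M.bellman α) J)
    {δ : ℝ} (hδ0 : 0 ≤ δ) (hδ : ∀ i j, c i = c j → dist (J i) (J j) ≤ δ) :
    dist (M.distributedBellman α c d J) J ≤ α * δ := by
  refine (dist_pi_le_iff (by positivity)).2 fun i => ?_
  calc dist (M.distributedBellman α c d J i) (J i)
      = dist (M.bellman α (localView c d (c i) J) i) (M.bellman α J i) := by
        rw [hJ.eq, distributedBellman]
    _ ≤ α * δ := (M.lipschitzWith_bellman_apply i).dist_le_mul_of_le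
        (dist_localView_self_le hd0 hd1 hδ0 hδ (c i))

theorem dist_fixedPoint_distributedBellman_le
    (hF : ContractingWith α (M.distributedBellman α c d)) (hd0 : ∀ i, 0 ≤ d (c i) i)
    (hd1 : ∀ ℓ, ∑ i with c i = ℓ, d ℓ i = 1) {J : X → ℝ} (hJ : Function.IsFixedPt (M.bellman α) J)
    {δ : ℝ} (hδ0 : 0 ≤ δ) (hδ : ∀ i j, c i = c j → dist (J i) (J j) ≤ δ) :
    dist (ContractingWith.fixedPoint _ hF) J ≤ α * δ / (1 - α) := by
  have hα : 0 ≤ 1 - (α : ℝ) := hF.one_sub_K_pos.le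
  calc dist (ContractingWith.fixedPoint _ hF) J
      ≤ dist J (M.distributedBellman α c d J) / (1 - α) := by
        rw [dist_comm]; exact hF.dist_fixedPoint_le J
    _ ≤ α * δ / (1 - α) := by
        gcongr
        rw [dist_comm]
        exact M.dist_distributedBellman_self_le hd0 hd1 hJ hδ0 hδ

end MarkovDecisionProcess

theorem stmt1_general
    {X L A : Type*} [Fintype X] [DecidableEq X] [Fintype L] [DecidableEq L]
    (α : ℝ) (hα0 : 0 ≤ α) (hα1 : α < 1)
    (I : L → Finset X)
    (hIdisj : ∀ ℓ m, ℓ ≠ m → Disjoint (I ℓ) (I m))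
    (hIcover : ∀ i, ∃ ℓ, i ∈ I ℓ)
    (U : X → Finset A) (hU : ∀ i, (U i).Nonempty)
    (p : X → A → X → ℝ) (g : X → A → X → ℝ)
    (hp0 : ∀ i, ∀ u ∈ U i, ∀ j, 0 ≤ p i u j)
    (hp1 : ∀ i, ∀ u ∈ U i, ∑ j, p i u j = 1)
    (d : L → X → ℝ)
    (hd0 : ∀ ℓ, ∀ i ∈ I ℓ, 0 ≤ d ℓ i)
    (hd1 : ∀ ℓ, ∑ i ∈ I ℓ, d ℓ i = 1)
    (E : ℕ → Finset (L × L))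
    (V : ℕ → L → X → ℝ) (r : ℕ → L → L → ℝ)
    (hVrec : ∀ k ℓ, ∀ i ∈ I ℓ,
      V (k + 1) ℓ i =
        (U i).inf' (hU i) (fun u => ∑ j, p i u j *
          (g i u j + α * ((if j ∈ I ℓ then (1 : ℝ) else 0) * V k ℓ j +
            ∑ m ∈ Finset.univ.erase ℓ, (if j ∈ I m then (1 : ℝ) else 0) * r k ℓ m))))
    (hrdiag : ∀ k ℓ, r (k + 1) ℓ ℓ = ∑ j ∈ I ℓ, d ℓ j * V (k + 1) ℓ j)
    (hroff : ∀ k ℓ m, m ≠ ℓ →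
      r (k + 1) ℓ m = if (m, ℓ) ∈ E k then r (k + 1) m m else r k ℓ m)
    (hEfull : ∀ᶠ k in atTop, ∀ m ℓ, (m, ℓ) ∈ E k)
    (Jstar : X → ℝ)
    (hJ : ∀ i, Jstar i =
      (U i).inf' (hU i) (fun u => ∑ j, p i u j * (g i u j + α * Jstar j)))
    (δ : ℝ)
    (hδ : IsGreatest {x : ℝ | ∃ ℓ, ∃ i ∈ I ℓ, ∃ j ∈ I ℓ, x = |Jstar i - Jstar j|} δ) :
    ∀ ℓ, ∀ i ∈ I ℓ, ∃ Vstar : ℝ,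
      Tendsto (fun k => V k ℓ i) atTop (𝓝 Vstar) ∧
      |Vstar - Jstar i| ≤ α * δ / (1 - α) := by
  lift α to NNReal using hα0
  obtain ⟨c, hc⟩ := exists_forall_mem_iff_eq hIdisj hIcover
  obtain rfl : I = fun m => ({i | c i = m} : Finset X) := by
    ext m i; rw [hc, mem_filter_univ]
  simp only [mem_filter_univ] at hd0 hVrec hδ ⊢
  let M : MarkovDecisionProcess X A := ⟨U, hU, p, g, hp0, hp1⟩
  have hd0' : ∀ i, 0 ≤ d (c i) i := fun i => hd0 (c i) i rfl
  have hF : ContractingWith α (M.distributedBellman α c d) :=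
    M.contractingWith_distributedBellman hα1 hd0' hd1
  have hr : ∀ᶠ k in atTop, ∀ ℓ m, r k ℓ m = ∑ i with c i = m, d m i * V k m i := by
    rw [← map_add_atTop_eq_nat 1, eventually_map]
    filter_upwards [hEfull] with k hk ℓ m
    rcases eq_or_ne m ℓ with rfl | hne
    · exact hrdiag k m
    · rw [hroff k ℓ m hne, if_pos (hk m ℓ), hrdiag]
  have hstep : ∀ᶠ k in atTop, (fun i => V (k + 1) (c i) i) =
      M.distributedBellman α c d fun i => V k (c i) i := by
    filter_upwards [hr] with k hk
    funext i
    simp only [hVrec k (c i) i rfl, ite_mul_add_sum_eq_localView (hk (c i))]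
    rfl
  have hlim := tendsto_fixedPoint_of_eventually_succ_eq (x := fun k i => V k (c i) i) hF hstep
  have hJfix : Function.IsFixedPt (M.bellman α) Jstar := funext fun i => (hJ i).symm
  have hosc : ∀ i j, c i = c j → dist (Jstar i) (Jstar j) ≤ δ := fun i j hij =>
    hδ.2 ⟨c i, i, rfl, j, hij.symm, rfl⟩
  rintro _ i rfl
  have hδ0 : 0 ≤ δ := dist_nonneg.trans (hosc i i rfl)
  exact ⟨_, tendsto_pi_nhds.1 hlim i, (dist_le_pi_dist _ Jstar i).trans
    (M.dist_fixedPoint_distributedBellman_le hF hd0' hd1 hJfix hδ0 hosc)⟩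

theorem stmt1
    {n q : ℕ} (hn : 0 < n) (hq : 0 < q)
    {A : Type*}
    (α : ℝ) (hα0 : 0 ≤ α) (hα1 : α < 1)
    (I : Fin q → Finset (Fin n))
    (hIne : ∀ ℓ, (I ℓ).Nonempty)
    (hIdisj : ∀ ℓ m, ℓ ≠ m → Disjoint (I ℓ) (I m))
    (hIcover : ∀ i : Fin n, ∃ ℓ, i ∈ I ℓ)
    (U : Fin n → Finset A) (hU : ∀ i, (U i).Nonempty)
    (p : Fin n → A → Fin n → ℝ) (g : Fin n → A → Fin n → ℝ)
    (hp0 : ∀ i, ∀ u ∈ U i, ∀ j, 0 ≤ p i u j)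
    (hp1 : ∀ i, ∀ u ∈ U i, ∑ j, p i u j = 1)
    (d : Fin q → Fin n → ℝ)
    (hd0 : ∀ ℓ i, 0 ≤ d ℓ i)
    (hdz : ∀ ℓ i, i ∉ I ℓ → d ℓ i = 0)
    (hd1 : ∀ ℓ, ∑ i ∈ I ℓ, d ℓ i = 1)
    (E : ℕ → Finset (Fin q × Fin q))
    (V : ℕ → Fin q → Fin n → ℝ) (r : ℕ → Fin q → Fin q → ℝ)
    (hV0 : ∀ ℓ, ∀ i ∈ I ℓ, V 0 ℓ i = 0)
    (hr0 : ∀ ℓ m, r 0 ℓ m = 0)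
    (hVrec : ∀ k ℓ, ∀ i ∈ I ℓ,
      V (k + 1) ℓ i =
        (U i).inf' (hU i) (fun u => ∑ j, p i u j *
          (g i u j + α * ((if j ∈ I ℓ then (1 : ℝ) else 0) * V k ℓ j +
            ∑ m ∈ Finset.univ.erase ℓ, (if j ∈ I m then (1 : ℝ) else 0) * r k ℓ m))))
    (hrdiag : ∀ k ℓ, r (k + 1) ℓ ℓ = ∑ j ∈ I ℓ, d ℓ j * V (k + 1) ℓ j)
    (hroff : ∀ k ℓ m, m ≠ ℓ →
      r (k + 1) ℓ m = if (m, ℓ) ∈ E k then r (k + 1) m m else r k ℓ m)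
    (hEfull : ∀ k (m ℓ : Fin q), (m, ℓ) ∈ E k)
    (Jstar : Fin n → ℝ)
    (hJ : ∀ i, Jstar i =
      (U i).inf' (hU i) (fun u => ∑ j, p i u j * (g i u j + α * Jstar j)))
    (δ : ℝ)
    (hδ : IsGreatest {x : ℝ | ∃ ℓ, ∃ i ∈ I ℓ, ∃ j ∈ I ℓ, x = |Jstar i - Jstar j|} δ) :
    ∀ ℓ, ∀ i ∈ I ℓ, ∃ Vstar : ℝ,
      Tendsto (fun k => V k ℓ i) atTop (𝓝 Vstar) ∧
      |Vstar - Jstar i| ≤ α * δ / (1 - α) :=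
  stmt1_general α hα0 hα1 I hIdisj hIcover U hU p g hp0 hp1 d (fun ℓ i _ => hd0 ℓ i) hd1 E V r
    hVrec hrdiag hroff (Eventually.of_forall hEfull) Jstar hJ δ hδ
end

section
/- Fix an agent ℓ and a state i ∈ I_ℓ. For any functions V, V' : X → ℝ and any vectors r, r' : {0,…,q−1} → ℝ, the agent update operator F_ℓ defined by F_ℓ(V,r)(i) = min_{u∈U(i)} Σ_{j∈X} p(i,u,j)·(g(i,u,j) + α·(φ_{jℓ}·V(j) + Σ_{m≠ℓ} φ_{jm}·r_m)) satisfies |F_ℓ(V,r)(i) − F_ℓ(V',r')(i)| ≤ α·max{ max_{j∈I_ℓ} |V(j) − V'(j)|, max_{m≠ℓ} |r_m − r'_m| }. -/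
open Finset Filter Topology

/-!
For each state `j`, the bracket `φ_{jℓ} V(j) + ∑_{m ≠ ℓ} φ_{jm} r_m` is the average, with weights
`φ_{j·}`, of the vector `r` whose `ℓ`-th entry has been replaced by `V(j)`. The update operator
is therefore an average over aggregates, followed by the affine map `x ↦ g + α x`, an average over
successor states and a minimum over actions. Averages and minima are nonexpansive in the
supremum norm, so the affine map alone contributes the factor `α`.
-/

theorem inf'_le_inf'_add {ι G : Type*} [LinearOrder G] [Add G] {s : Finset ι} (hs : s.Nonempty)
    {f g : ι → G} {d : G} (h : ∀ i ∈ s, f i ≤ g i + d) : s.inf' hs f ≤ s.inf' hs g + d := by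
  obtain ⟨b, hb, hgb⟩ := exists_mem_eq_inf' hs g
  calc s.inf' hs f ≤ f b := inf'_le f hb
    _ ≤ g b + d := h b hb
    _ = s.inf' hs g + d := by rw [hgb]

theorem abs_inf'_sub_inf'_le {ι G : Type*} [AddCommGroup G] [LinearOrder G]
    [IsOrderedAddMonoid G] {s : Finset ι} (hs : s.Nonempty) {f g : ι → G} {d : G}
    (h : ∀ i ∈ s, |f i - g i| ≤ d) : |s.inf' hs f - s.inf' hs g| ≤ d := by
  simp only [abs_sub_le_iff, sub_le_iff_le_add'] at h ⊢
  exact ⟨inf'_le_inf'_add hs fun i hi ↦ (h i hi).1, inf'_le_inf'_add hs fun i hi ↦ (h i hi).2⟩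

theorem abs_sum_mul_sub_sum_mul_le {ι R : Type*} [Ring R] [LinearOrder R] [IsOrderedRing R]
    {s : Finset ι} {w x y : ι → R} {c : R} (hw0 : ∀ i ∈ s, 0 ≤ w i) (hw1 : ∑ i ∈ s, w i = 1)
    (h : ∀ i ∈ s, w i ≠ 0 → |x i - y i| ≤ c) :
    |∑ i ∈ s, w i * x i - ∑ i ∈ s, w i * y i| ≤ c := by
  have term_le : ∀ i ∈ s, |w i * (x i - y i)| ≤ w i * c := fun i hi ↦ by
    obtain hwi | hwi := eq_or_ne (w i) 0
    · simp [hwi]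
    · rw [abs_mul, abs_of_nonneg (hw0 i hi)]
      exact mul_le_mul_of_nonneg_left (h i hi hwi) (hw0 i hi)
  calc |∑ i ∈ s, w i * x i - ∑ i ∈ s, w i * y i|
      = |∑ i ∈ s, w i * (x i - y i)| := by simp only [mul_sub, sum_sub_distrib]
    _ ≤ ∑ i ∈ s, |w i * (x i - y i)| := abs_sum_le_sum_abs _ _
    _ ≤ ∑ i ∈ s, w i * c := sum_le_sum term_le
    _ = c := by rw [← sum_mul, hw1, one_mul]

section HardAggregation

variable {X κ R : Type*} [DecidableEq X] [One R]

/-- The 0-1 aggregation probabilities `φ_{jm}` attached to a family `I` of sets of states. They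
form a probability vector for each `j` when `I` partitions the states, each agent `m` owning
`I m`. -/
def hardAggregation [Zero R] (I : κ → Finset X) (j : X) (m : κ) : R :=
  if j ∈ I m then 1 else 0

theorem hardAggregation_nonneg [Zero R] [Preorder R] [ZeroLEOneClass R] (I : κ → Finset X)
    (j : X) (m : κ) : (0 : R) ≤ hardAggregation I j m :=
  ite_nonneg zero_le_one le_rfl

theorem sum_hardAggregation_eq_one [Fintype κ] [AddCommMonoid R] {I : κ → Finset X} {j : X}
    (hdisj : Pairwise (Function.onFun Disjoint I)) (hcover : ∃ m, j ∈ I m) :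
    ∑ m, (hardAggregation I j m : R) = 1 := by
  obtain ⟨k, hk⟩ := hcover
  have notMem : ∀ m, m ≠ k → j ∉ I m := fun m hmk hm ↦ disjoint_left.mp (hdisj hmk) hm hk
  calc ∑ m, (hardAggregation I j m : R) = hardAggregation I j k :=
        Fintype.sum_eq_single k fun m hmk ↦ if_neg (notMem m hmk)
    _ = 1 := if_pos hk

end HardAggregation

section Aggregation

variable {X κ A R : Type*} [Fintype κ] [DecidableEq κ]

/-- The cost-to-go at state `j` as seen by agent `ℓ`: the agent's own value `V j` weighted by
`φ j ℓ`, plus the values `r m` communicated by the other agents `m`, weighted by `φ j m`. -/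
def aggregateCost [Semiring R] (φ : X → κ → R) (ℓ : κ) (V : X → R) (r : κ → R) (j : X) : R :=
  φ j ℓ * V j + ∑ m ∈ univ.erase ℓ, φ j m * r m

/-- The update operator `F_ℓ` of agent `ℓ`: one step of value iteration in which the cost-to-go of
the successor state is `aggregateCost`. The aggregation probabilities `φ` are arbitrary rather
than tied to a partition of the states. -/
def agentUpdate [Fintype X] [Ring R] [LinearOrder R] (α : R) (φ : X → κ → R)
    (U : X → Finset A) (hU : ∀ i, (U i).Nonempty) (p g : X → A → X → R)
    (ℓ : κ) (V : X → R) (r : κ → R) (i : X) : R :=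
  (U i).inf' (hU i) fun u ↦ ∑ j, p i u j * (g i u j + α * aggregateCost φ ℓ V r j)

theorem aggregateCost_eq_sum_update [Semiring R] (φ : X → κ → R) (ℓ : κ) (V : X → R)
    (r : κ → R) (j : X) :
    aggregateCost φ ℓ V r j = ∑ m, φ j m * Function.update r ℓ (V j) m := by
  rw [aggregateCost, ← add_sum_erase _ _ (mem_univ ℓ), Function.update_self]
  congr 1
  refine sum_congr rfl fun m hm ↦ ?_
  rw [Function.update_of_ne (ne_of_mem_erase hm)]

theorem abs_aggregateCost_sub_le [Ring R] [LinearOrder R] [IsOrderedRing R] {φ : X → κ → R}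
    {ℓ : κ} {V V' : X → R} {r r' : κ → R} {c : R} {j : X} (hφ0 : ∀ m, 0 ≤ φ j m)
    (hφ1 : ∑ m, φ j m = 1) (hV : φ j ℓ ≠ 0 → |V j - V' j| ≤ c)
    (hr : ∀ m, m ≠ ℓ → |r m - r' m| ≤ c) :
    |aggregateCost φ ℓ V r j - aggregateCost φ ℓ V' r' j| ≤ c := by
  simp only [aggregateCost_eq_sum_update]
  refine abs_sum_mul_sub_sum_mul_le (fun m _ ↦ hφ0 m) hφ1 fun m _ hm ↦ ?_
  obtain rfl | hmℓ := eq_or_ne m ℓ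
  · simpa only [Function.update_self] using hV hm
  · simpa only [Function.update_of_ne hmℓ] using hr m hmℓ

theorem stmt2_general [Fintype X] [Ring R] [LinearOrder R] [IsOrderedRing R]
    {α : R} (hα : 0 ≤ α) {φ : X → κ → R} (hφ0 : ∀ j m, 0 ≤ φ j m) (hφ1 : ∀ j, ∑ m, φ j m = 1)
    {U : X → Finset A} (hU : ∀ i, (U i).Nonempty) {p : X → A → X → R} (g : X → A → X → R) {i : X}
    (hp0 : ∀ u ∈ U i, ∀ j, 0 ≤ p i u j) (hp1 : ∀ u ∈ U i, ∑ j, p i u j = 1)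
    {ℓ : κ} {V V' : X → R} {r r' : κ → R} {c : R}
    (hV : ∀ j, φ j ℓ ≠ 0 → |V j - V' j| ≤ c) (hr : ∀ m, m ≠ ℓ → |r m - r' m| ≤ c) :
    |agentUpdate α φ U hU p g ℓ V r i - agentUpdate α φ U hU p g ℓ V' r' i| ≤ α * c := by
  refine abs_inf'_sub_inf'_le (hU i) fun u hu ↦
    abs_sum_mul_sub_sum_mul_le (fun j _ ↦ hp0 u hu j) (hp1 u hu) fun j _ _ ↦ ?_
  rw [add_sub_add_left_eq_sub, ← mul_sub, abs_mul, abs_of_nonneg hα]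
  exact mul_le_mul_of_nonneg_left (abs_aggregateCost_sub_le (hφ0 j) (hφ1 j) (hV j) hr) hα

end Aggregation

theorem stmt2
    {n q : ℕ} (hn : 0 < n) (hq : 0 < q)
    {A : Type*}
    (α : ℝ) (hα0 : 0 ≤ α) (hα1 : α < 1)
    (I : Fin q → Finset (Fin n))
    (hIne : ∀ ℓ, (I ℓ).Nonempty)
    (hIdisj : ∀ ℓ m, ℓ ≠ m → Disjoint (I ℓ) (I m))
    (hIcover : ∀ i : Fin n, ∃ ℓ, i ∈ I ℓ)
    (U : Fin n → Finset A) (hU : ∀ i, (U i).Nonempty)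
    (p : Fin n → A → Fin n → ℝ) (g : Fin n → A → Fin n → ℝ)
    (hp0 : ∀ i, ∀ u ∈ U i, ∀ j, 0 ≤ p i u j)
    (hp1 : ∀ i, ∀ u ∈ U i, ∑ j, p i u j = 1)
    (ℓ : Fin q) (i : Fin n) (hi : i ∈ I ℓ)
    (V V' : Fin n → ℝ) (rv rv' : Fin q → ℝ) :
    ∀ c : ℝ,
      (∀ j ∈ I ℓ, |V j - V' j| ≤ c) →
      (∀ m : Fin q, m ≠ ℓ → |rv m - rv' m| ≤ c) →
      |(U i).inf' (hU i) (fun u => ∑ j, p i u j *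
          (g i u j + α * ((if j ∈ I ℓ then (1 : ℝ) else 0) * V j +
            ∑ m ∈ Finset.univ.erase ℓ, (if j ∈ I m then (1 : ℝ) else 0) * rv m))) -
        (U i).inf' (hU i) (fun u => ∑ j, p i u j *
          (g i u j + α * ((if j ∈ I ℓ then (1 : ℝ) else 0) * V' j +
            ∑ m ∈ Finset.univ.erase ℓ, (if j ∈ I m then (1 : ℝ) else 0) * rv' m)))| ≤
        α * c := by
  intro c hV hr
  exact stmt2_general hα0 (hardAggregation_nonneg I)
    (fun j ↦ sum_hardAggregation_eq_one hIdisj (hIcover j)) hU g (hp0 i) (hp1 i)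
    (fun j hj ↦ hV j (of_not_not fun hjℓ ↦ hj (if_neg hjℓ))) hr
end

section
/- Suppose J* : X → ℝ satisfies the Bellman equation J*(i) = min_{u∈U(i)} Σ_{j∈X} p(i,u,j)·(g(i,u,j) + α·J*(j)) for all i ∈ X, and let δ = max_{ℓ} max_{i,j∈I_ℓ} |J*(i) − J*(j)|. Define V̲(j) = J*(j) − α·δ/(1−α) for j ∈ X and r̲_m = Σ_{j∈I_m} d_{mj}·V̲(j) for each agent m. Then for every agent ℓ and every state i ∈ I_ℓ: min_{u∈U(i)} Σ_{j∈X} p(i,u,j)·(g(i,u,j) + α·(φ_{jℓ}·V̲(j) + Σ_{m≠ℓ} φ_{jm}·r̲_m)) ≥ V̲(i). -/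
open Finset Filter Topology

/-!
Agent `ℓ` evaluates states of its own block exactly and states of another block by a weighted
average over that block. As `J` varies by at most `δ` on each block, replacing `V = J - c` by this
evaluation loses at most `δ`, so the evaluation dominates `J - (δ + c)` everywhere. By monotonicity
the cost of one Bellman step drops by at most `α * (δ + c)`, and `c = α * δ / (1 - α)` is chosen
to solve `α * (δ + c) = c`.
-/

section DiscountedCost

variable {X R : Type*} [Fintype X]

/-- The Q-factor `∑ⱼ pⱼ (gⱼ + α Wⱼ)` of one state-action pair: the expected cost of a transition
followed by the discounted cost-to-go `W`. Here `p` and `g` are the transition probabilities and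
costs out of that fixed pair, as functions of the next state. -/
def discountedCost [Semiring R] (α : R) (p g W : X → R) : R :=
  ∑ j, p j * (g j + α * W j)

theorem discountedCost_mono [Semiring R] [PartialOrder R] [IsOrderedRing R] {α : R} {p : X → R}
    (g : X → R) {W W' : X → R} (hα : 0 ≤ α) (hp : ∀ j, 0 ≤ p j) (hW : ∀ j, W j ≤ W' j) :
    discountedCost α p g W ≤ discountedCost α p g W' := by
  refine sum_le_sum fun j _ => mul_le_mul_of_nonneg_left ?_ (hp j)
  gcongr
  exact hW j

theorem discountedCost_sub_const [Ring R] (α : R) {p : X → R} (g W : X → R) (c : R)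
    (hp : ∑ j, p j = 1) :
    discountedCost α p g (fun j => W j - c) = discountedCost α p g W - α * c := by
  calc ∑ j, p j * (g j + α * (W j - c))
      = ∑ j, (p j * (g j + α * W j) - p j * (α * c)) :=
        sum_congr rfl fun j _ => by noncomm_ring
    _ = discountedCost α p g W - α * c := by
        rw [sum_sub_distrib, ← sum_mul, hp, one_mul, discountedCost]

end DiscountedCost

section AgentValue

variable {X Q R : Type*} [DecidableEq X] [Fintype Q] [DecidableEq Q]

/-- The cost-to-go seen by agent `ℓ`: the exact value `V j` on its own block `I ℓ`, and the
aggregate value `r m` on the block `I m` of another agent `m`. The aggregation probabilities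
`φ j m` are encoded as the indicators of `j ∈ I m`. -/
def agentValue [Semiring R] (I : Q → Finset X) (V : X → R) (r : Q → R) (ℓ : Q) (j : X) : R :=
  (if j ∈ I ℓ then 1 else 0) * V j +
    ∑ m ∈ univ.erase ℓ, (if j ∈ I m then 1 else 0) * r m

theorem mem_iff_eq_of_pairwise_disjoint {ι β : Type*} {s : ι → Finset β}
    (hs : Pairwise (Function.onFun Disjoint s)) {k : ι} {x : β} (hx : x ∈ s k) (m : ι) :
    x ∈ s m ↔ m = k :=
  ⟨fun hm => hs.eq fun h => disjoint_left.mp h hm hx, fun h => h ▸ hx⟩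

theorem agentValue_of_mem [Semiring R] {I : Q → Finset X}
    (hI : Pairwise (Function.onFun Disjoint I)) (V : X → R) (r : Q → R) {ℓ : Q} {j : X}
    (hj : j ∈ I ℓ) : agentValue I V r ℓ j = V j := by
  simp [agentValue, mem_iff_eq_of_pairwise_disjoint hI hj]

theorem agentValue_of_mem_of_ne [Semiring R] {I : Q → Finset X}
    (hI : Pairwise (Function.onFun Disjoint I)) (V : X → R) (r : Q → R) {ℓ m : Q} {j : X}
    (hj : j ∈ I m) (hm : m ≠ ℓ) : agentValue I V r ℓ j = r m := by
  simp [agentValue, mem_iff_eq_of_pairwise_disjoint hI hj, hm, hm.symm]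

end AgentValue

section OscillationBound

variable {X Q R : Type*} [Ring R] [PartialOrder R] [IsOrderedRing R]

theorem sub_le_sum_mul_of_sub_le {s : Finset X} {w V : X → R} {δ : R}
    (hw0 : ∀ k ∈ s, 0 ≤ w k) (hw1 : ∑ k ∈ s, w k = 1) {j : X} (hV : ∀ k ∈ s, V j - V k ≤ δ) :
    V j - δ ≤ ∑ k ∈ s, w k * V k := by
  calc V j - δ = ∑ k ∈ s, w k * (V j - δ) := by rw [← sum_mul, hw1, one_mul]
    _ ≤ ∑ k ∈ s, w k * V k :=
        sum_le_sum fun k hk => mul_le_mul_of_nonneg_left (sub_le_comm.mp (hV k hk)) (hw0 k hk)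

theorem sub_le_agentValue [DecidableEq X] [Fintype Q] [DecidableEq Q] {I : Q → Finset X}
    (hdisj : Pairwise (Function.onFun Disjoint I)) (hcover : ∀ j, ∃ m, j ∈ I m)
    {d : Q → X → R} (hd0 : ∀ m, ∀ j ∈ I m, 0 ≤ d m j) (hd1 : ∀ m, ∑ j ∈ I m, d m j = 1)
    {V : X → R} {δ : R} (hV : ∀ m, ∀ j ∈ I m, ∀ k ∈ I m, V j - V k ≤ δ) (ℓ : Q) (j : X) :
    V j - δ ≤ agentValue I V (fun m => ∑ k ∈ I m, d m k * V k) ℓ j := by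
  obtain ⟨m, hj⟩ := hcover j
  rcases eq_or_ne m ℓ with rfl | hm
  · have hδ : 0 ≤ δ := by simpa only [sub_self] using hV m j hj j hj
    rw [agentValue_of_mem hdisj V _ hj]
    exact sub_le_self _ hδ
  · rw [agentValue_of_mem_of_ne hdisj V _ hj hm]
    exact sub_le_sum_mul_of_sub_le (hd0 m) (hd1 m) (hV m j hj)

end OscillationBound

theorem stmt8_general {X Q A K : Type*} [Fintype X] [DecidableEq X] [Fintype Q] [DecidableEq Q]
    [Field K] [LinearOrder K] [IsStrictOrderedRing K]
    {α : K} (hα0 : 0 ≤ α) (hα1 : α ≠ 1)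
    {I : Q → Finset X} (hdisj : Pairwise (Function.onFun Disjoint I))
    (hcover : ∀ j, ∃ m, j ∈ I m)
    {U : X → Set A} {p g : X → A → X → K}
    (hp0 : ∀ i, ∀ u ∈ U i, ∀ j, 0 ≤ p i u j) (hp1 : ∀ i, ∀ u ∈ U i, ∑ j, p i u j = 1)
    {d : Q → X → K} (hd0 : ∀ m, ∀ j ∈ I m, 0 ≤ d m j) (hd1 : ∀ m, ∑ j ∈ I m, d m j = 1)
    {J : X → K} (hJ : ∀ i, ∀ u ∈ U i, J i ≤ discountedCost α (p i u) (g i u) J)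
    {δ : K} (hδ : ∀ m, ∀ j ∈ I m, ∀ k ∈ I m, J j - J k ≤ δ)
    {V : X → K} (hV : ∀ j, V j = J j - α * δ / (1 - α))
    {r : Q → K} (hr : ∀ m, r m = ∑ j ∈ I m, d m j * V j) (ℓ : Q) (i : X) :
    ∀ u ∈ U i, V i ≤ discountedCost α (p i u) (g i u) (agentValue I V r ℓ) := by
  intro u hu
  set c := α * δ / (1 - α)
  have hc : α * (δ + c) = c := by
    have : 1 - α ≠ 0 := sub_ne_zero.mpr hα1.symm
    simp only [c]
    field_simp
    ring
  have hVδ : ∀ m, ∀ j ∈ I m, ∀ k ∈ I m, V j - V k ≤ δ := by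
    simpa only [hV, sub_sub_sub_cancel_right] using hδ
  have hagent : ∀ j, J j - (δ + c) ≤ agentValue I V r ℓ j := fun j =>
    calc J j - (δ + c) = V j - δ := by rw [hV, sub_sub, add_comm]
      _ ≤ agentValue I V r ℓ j := by
        rw [funext hr]
        exact sub_le_agentValue hdisj hcover hd0 hd1 hVδ ℓ j
  calc V i = J i - c := hV i
    _ ≤ discountedCost α (p i u) (g i u) J - c := sub_le_sub_right (hJ i u hu) c
    _ = discountedCost α (p i u) (g i u) (fun j => J j - (δ + c)) := by
        rw [discountedCost_sub_const α (g i u) J (δ + c) (hp1 i u hu), hc]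
    _ ≤ discountedCost α (p i u) (g i u) (agentValue I V r ℓ) :=
        discountedCost_mono (g i u) hα0 (hp0 i u hu) hagent

theorem stmt8
    {n q : ℕ} (hn : 0 < n) (hq : 0 < q)
    {A : Type*}
    (α : ℝ) (hα0 : 0 ≤ α) (hα1 : α < 1)
    (I : Fin q → Finset (Fin n))
    (hIne : ∀ ℓ, (I ℓ).Nonempty)
    (hIdisj : ∀ ℓ m, ℓ ≠ m → Disjoint (I ℓ) (I m))
    (hIcover : ∀ i : Fin n, ∃ ℓ, i ∈ I ℓ)
    (U : Fin n → Finset A) (hU : ∀ i, (U i).Nonempty)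
    (p : Fin n → A → Fin n → ℝ) (g : Fin n → A → Fin n → ℝ)
    (hp0 : ∀ i, ∀ u ∈ U i, ∀ j, 0 ≤ p i u j)
    (hp1 : ∀ i, ∀ u ∈ U i, ∑ j, p i u j = 1)
    (d : Fin q → Fin n → ℝ)
    (hd0 : ∀ ℓ i, 0 ≤ d ℓ i)
    (hdz : ∀ ℓ i, i ∉ I ℓ → d ℓ i = 0)
    (hd1 : ∀ ℓ, ∑ i ∈ I ℓ, d ℓ i = 1)
    (Jstar : Fin n → ℝ)
    (hJ : ∀ i, Jstar i =
      (U i).inf' (hU i) (fun u => ∑ j, p i u j * (g i u j + α * Jstar j)))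
    (δ : ℝ)
    (hδ : IsGreatest {x : ℝ | ∃ ℓ, ∃ i ∈ I ℓ, ∃ j ∈ I ℓ, x = |Jstar i - Jstar j|} δ)
    (Vlow : Fin n → ℝ) (hVlow : ∀ j, Vlow j = Jstar j - α * δ / (1 - α))
    (rlow : Fin q → ℝ) (hrlow : ∀ m, rlow m = ∑ j ∈ I m, d m j * Vlow j) :
    ∀ ℓ, ∀ i ∈ I ℓ,
      Vlow i ≤
      (U i).inf' (hU i) (fun u => ∑ j, p i u j *
          (g i u j + α * ((if j ∈ I ℓ then (1 : ℝ) else 0) * Vlow j +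
            ∑ m ∈ Finset.univ.erase ℓ, (if j ∈ I m then (1 : ℝ) else 0) * rlow m))) := by
  intro ℓ i _
  exact le_inf' _ _ <| stmt8_general (U := fun i => U i) (p := p) (g := g) hα0 hα1.ne
    hIdisj hIcover hp0 hp1 (fun m j _ => hd0 m j) hd1
    (fun i _ hu => (hJ i).trans_le (inf'_le _ hu))
    (fun m j hj k hk => (le_abs_self _).trans (hδ.2 ⟨m, j, hj, k, hk, rfl⟩)) hVlow hrlow ℓ i
end

section
/- There exists a unique function J* : X → ℝ satisfying the Bellman equation J*(i) = min_{u∈U(i)} Σ_{j∈X} p(i,u,j)·(g(i,u,j) + α·J*(j)) for all i ∈ X; moreover, for any initial J_0 : X → ℝ the value iteration sequence J_{k+1} = T J_k converges to J* pointwise. -/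
open Finset Filter Topology

/-!
For a fixed state and action, the cost-to-go is an affine function of `J`, and in the sup norm its
Lipschitz constant is at most `|α|` as soon as the transition weights have `ℓ¹`-norm at most `1`.
Pointwise infima and passing to the product over all states preserve a Lipschitz constant, so the
Bellman operator is a contraction of the complete space `ι → ℝ`, and Banach's fixed point theorem
applies.
-/

section Contraction

open scoped NNReal

variable {E ι A : Type*} {K : ℝ≥0}

lemma lipschitzWith_of_isGLB_image [PseudoMetricSpace E] {s : Set A} {f : A → E → ℝ} {F : E → ℝ}
    (hf : ∀ u ∈ s, LipschitzWith K (f u)) (hF : ∀ x, IsGLB ((fun u => f u x) '' s) (F x)) :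
    LipschitzWith K F := by
  refine LipschitzWith.of_le_add_mul K fun x y => ?_
  have lower_bound : F x - K * dist x y ∈ lowerBounds ((fun u => f u y) '' s) := by
    rintro _ ⟨u, hu, rfl⟩
    refine sub_le_iff_le_add.2 ?_
    calc
      F x ≤ f u x := (hF x).1 ⟨u, hu, rfl⟩
      _ ≤ f u y + K * dist x y := (hf u hu).le_add_mul x y
  exact sub_le_iff_le_add.1 ((hF y).2 lower_bound)

lemma lipschitzWith_pi_of_forall [Fintype ι] {X : ι → Type*} [PseudoEMetricSpace E]
    [∀ i, PseudoEMetricSpace (X i)] {f : E → ∀ i, X i}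
    (hf : ∀ i, LipschitzWith K fun x => f x i) : LipschitzWith K f :=
  fun x y => edist_pi_le_iff.2 fun i => hf i x y

lemma eq_iterate_of_forall_succ {x : ℕ → E} {T : E → E} (hx : ∀ k, x (k + 1) = T (x k)) (k : ℕ) :
    x k = T^[k] (x 0) := by
  induction k with
  | zero => rfl
  | succ k ih => rw [hx, ih, Function.iterate_succ_apply']

lemma tendsto_fixedPoint_of_forall_succ [MetricSpace E] [CompleteSpace E] [Nonempty E] {T : E → E}
    (hT : ContractingWith K T) {x : ℕ → E} (hx : ∀ k, x (k + 1) = T (x k)) :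
    Tendsto x atTop (𝓝 (ContractingWith.fixedPoint T hT)) := by
  rw [funext (eq_iterate_of_forall_succ hx)]
  exact hT.tendsto_iterate_fixedPoint (x 0)

end Contraction

section Bellman

variable {ι A : Type*}

lemma isGLB_image_inf' {β : Type*} [SemilatticeInf β] {s : Finset A} (hs : s.Nonempty)
    (f : A → β) : IsGLB (f '' s) (s.inf' hs f) := by
  refine isGLB_iff_le_iff.2 fun b => ?_
  simp only [le_inf'_iff, mem_lowerBounds, Set.forall_mem_image, mem_coe]

variable [Fintype ι]

/-- The Q-factor of a single state-action pair with transition weights `p j` and transition costs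
`g j`: the expected cost of one step plus the cost-to-go `J`, discounted by `α`. The weights are
arbitrary reals, not necessarily a probability vector. -/
def qFactor (α : ℝ) (p g J : ι → ℝ) : ℝ := ∑ j, p j * (g j + α * J j)

lemma qFactor_sub_qFactor (α : ℝ) (p g J J' : ι → ℝ) :
    qFactor α p g J - qFactor α p g J' = α * ∑ j, p j * (J j - J' j) := by
  rw [qFactor, qFactor, ← sum_sub_distrib, mul_sum]
  exact sum_congr rfl fun j _ => by ring

lemma abs_sum_mul_sub_le_dist {p : ι → ℝ} (hp : ∑ j, |p j| ≤ 1) (J J' : ι → ℝ) :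
    |∑ j, p j * (J j - J' j)| ≤ dist J J' :=
  calc
    |∑ j, p j * (J j - J' j)| ≤ ∑ j, |p j * (J j - J' j)| := abs_sum_le_sum_abs _ _
    _ = ∑ j, |p j| * dist (J j) (J' j) := by simp only [abs_mul, Real.dist_eq]
    _ ≤ ∑ j, |p j| * dist J J' := by gcongr; exact dist_le_pi_dist J J' _
    _ = (∑ j, |p j|) * dist J J' := (sum_mul _ _ _).symm
    _ ≤ dist J J' := mul_le_of_le_one_left dist_nonneg hp

lemma lipschitzWith_qFactor (α : ℝ) {p : ι → ℝ} (hp : ∑ j, |p j| ≤ 1) (g : ι → ℝ) :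
    LipschitzWith ‖α‖₊ (qFactor α p g) := by
  refine LipschitzWith.of_dist_le_mul fun J J' => ?_
  rw [Real.dist_eq, qFactor_sub_qFactor, abs_mul, coe_nnnorm, Real.norm_eq_abs]
  exact mul_le_mul_of_nonneg_left (abs_sum_mul_sub_le_dist hp J J') (abs_nonneg α)

/-- `T` is the Bellman operator of the discounted decision problem with admissible actions `U`,
transition weights `p` and costs `g`. Using `IsGLB` allows infinite action sets: the infimum over
`U i` has to be finite but need not be attained. -/
def IsBellmanOperator (α : ℝ) (U : ι → Set A) (p g : ι → A → ι → ℝ) (T : (ι → ℝ) → ι → ℝ) : Prop :=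
  ∀ J i, IsGLB ((fun u => qFactor α (p i u) (g i u) J) '' U i) (T J i)

lemma IsBellmanOperator.contractingWith {α : ℝ} {U : ι → Set A} {p g : ι → A → ι → ℝ}
    {T : (ι → ℝ) → ι → ℝ} (hT : IsBellmanOperator α U p g T) (hα : |α| < 1)
    (hp : ∀ i, ∀ u ∈ U i, ∑ j, |p i u j| ≤ 1) : ContractingWith ‖α‖₊ T := by
  refine ⟨mod_cast hα, lipschitzWith_pi_of_forall fun i => ?_⟩
  exact lipschitzWith_of_isGLB_image (fun u hu => lipschitzWith_qFactor α (hp i u hu) (g i u))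
    fun J => hT J i

theorem stmt12_general (α : ℝ) (hα : |α| < 1) (U : ι → Set A) (p g : ι → A → ι → ℝ)
    (hp : ∀ i, ∀ u ∈ U i, ∑ j, |p i u j| ≤ 1) (T : (ι → ℝ) → ι → ℝ)
    (hT : IsBellmanOperator α U p g T) :
    ∃ Jstar : ι → ℝ,
      (∀ i, Jstar i = T Jstar i) ∧
      (∀ J' : ι → ℝ, (∀ i, J' i = T J' i) → J' = Jstar) ∧
      (∀ Jseq : ℕ → ι → ℝ, (∀ k, Jseq (k + 1) = T (Jseq k)) →
        ∀ i, Tendsto (fun k => Jseq k i) atTop (𝓝 (Jstar i))) := by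
  have contracting : ContractingWith ‖α‖₊ T := hT.contractingWith hα hp
  refine ⟨ContractingWith.fixedPoint T contracting, fun i => ?_, fun J' hJ' => ?_,
    fun Jseq hJseq => ?_⟩
  · exact (congrFun contracting.fixedPoint_isFixedPt i).symm
  · exact contracting.fixedPoint_unique (funext hJ').symm
  · exact tendsto_pi_nhds.1 (tendsto_fixedPoint_of_forall_succ contracting hJseq)

end Bellman

theorem stmt12
    {n : ℕ} (hn : 0 < n)
    {A : Type*}
    (α : ℝ) (hα0 : 0 ≤ α) (hα1 : α < 1)
    (U : Fin n → Finset A) (hU : ∀ i, (U i).Nonempty)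
    (p : Fin n → A → Fin n → ℝ) (g : Fin n → A → Fin n → ℝ)
    (hp0 : ∀ i, ∀ u ∈ U i, ∀ j, 0 ≤ p i u j)
    (hp1 : ∀ i, ∀ u ∈ U i, ∑ j, p i u j = 1)
    (T : (Fin n → ℝ) → (Fin n → ℝ))
    (hT : ∀ (J : Fin n → ℝ) (i : Fin n),
      T J i = (U i).inf' (hU i) (fun u => ∑ j, p i u j * (g i u j + α * J j)))
    :
    ∃ Jstar : Fin n → ℝ,
      (∀ i, Jstar i = T Jstar i) ∧
      (∀ J' : Fin n → ℝ, (∀ i, J' i = T J' i) → J' = Jstar) ∧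
      (∀ Jseq : ℕ → Fin n → ℝ, (∀ k, Jseq (k + 1) = T (Jseq k)) →
        ∀ i, Tendsto (fun k => Jseq k i) atTop (𝓝 (Jstar i))) := by
  have sum_abs_le_one : ∀ i, ∀ u ∈ U i, ∑ j, |p i u j| ≤ 1 := fun i u hu =>
    ((sum_congr rfl fun j _ => abs_of_nonneg (hp0 i u hu j)).trans (hp1 i u hu)).le
  exact stmt12_general α ((abs_of_nonneg hα0).trans_lt hα1) (fun i => U i) p g sum_abs_le_one T
    fun J i => hT J i ▸ isGLB_image_inf' (hU i) _
end
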